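/- arXiv:2512.24734 — 6 statements merged into one kernel-verified Lean document; each statement's English description precedes it below -/
import Mathlib

section
/- Let (𝔭_j)_{j∈ℕ} be nonnegative reals with Σ_{j=0}^∞ 𝔭_j ≤ 1, and let a_k := μ_k(0) be the occupation probabilities of 0 for the boundary random walk started at i₀ = 0, defined by the substochastic iteration μ_0 = δ_0, μ_{k+1}(j) = Σ_{i∈ℕ} μ_k(i) P(i,j). Then for every x ∈ (0,1), the series F(x) := Σ_{k=0}^∞ a_k x^k converges and F(x) = 1 / (1 − x · Σ_{k=0}^∞ 𝔭_k ((1 − √(1 − x²))/x)^k). -/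
/-- The substochastic transition matrix of a boundary random walk on ℕ with
jumping measure `p` at the boundary state `0`: from `0` it moves to `j` with
probability `p j` (the deficit being the killing probability), and from `i ≥ 1`
it moves to `i - 1` or `i + 1` with probability `1/2` each. -/
noncomputable def Ptrans (p : ℕ → ℝ) : ℕ → ℕ → ℝ
  | 0, j => p j
  | i + 1, j => if j = i ∨ j = i + 2 then 1 / 2 else 0

/-- The (substochastic) distribution at time `k` of the boundary random walk
with jumping measure `p` started at `i₀`. -/
noncomputable def occ (p : ℕ → ℝ) (i₀ : ℕ) : ℕ → ℕ → ℝ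
  | 0 => fun j => if j = i₀ then 1 else 0
  | k + 1 => fun j => ∑' i : ℕ, occ p i₀ k i * Ptrans p i j

lemma occ_succ_zero (p : ℕ → ℝ) (k : ℕ) :
    occ p 0 (k+1) 0 = occ p 0 k 0 * p 0 + 1/2 * occ p 0 k 1 := by
  have h : occ p 0 (k+1) 0 = ∑' i : ℕ, occ p 0 k i * Ptrans p i 0 := rfl
  rw [h, tsum_eq_sum (s := {0, 1})]
  · rw [Finset.sum_pair (by norm_num)]
    simp [Ptrans]; ring
  · intro b hb
    rcases b with _ | _ | b <;> simp_all [Ptrans]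

lemma occ_succ_one (p : ℕ → ℝ) (k : ℕ) :
    occ p 0 (k+1) 1 = occ p 0 k 0 * p 1 + 1/2 * occ p 0 k 2 := by
  have h : occ p 0 (k+1) 1 = ∑' i : ℕ, occ p 0 k i * Ptrans p i 1 := rfl
  rw [h, tsum_eq_sum (s := {0, 2})]
  · rw [Finset.sum_pair (by norm_num)]
    simp [Ptrans]; ring
  · intro b hb
    rcases b with _ | _ | _ | b <;> simp_all [Ptrans]

lemma occ_succ_two (p : ℕ → ℝ) (k j : ℕ) :
    occ p 0 (k+1) (j+2) =
      occ p 0 k 0 * p (j+2) + 1/2 * occ p 0 k (j+3) + 1/2 * occ p 0 k (j+1) := by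
  have h : occ p 0 (k+1) (j+2) = ∑' i : ℕ, occ p 0 k i * Ptrans p i (j+2) := rfl
  rw [h, tsum_eq_sum (s := {0, j+3, j+1})]
  · rw [Finset.sum_insert (by simp), Finset.sum_pair (by omega)]
    simp [Ptrans]; ring
  · intro b hb
    rcases b with _ | b
    · simp at hb
    · simp only [Finset.mem_insert, Finset.mem_singleton] at hb
      have : ¬ (j + 2 = b ∨ j + 2 = b + 2) := by omega
      simp only [Ptrans, if_neg this, mul_zero]

lemma occ_step (p : ℕ → ℝ) (k : ℕ) (r G S : ℝ) (hr : 0 < r)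
    (hG : HasSum (fun j => p j * r ^ j) G)
    (hS : HasSum (fun j => occ p 0 k j * r ^ j) S) :
    HasSum (fun j => occ p 0 (k+1) j * r ^ j)
      (occ p 0 k 0 * G + (S - occ p 0 k 0) * ((1 + r^2) / (2 * r))) := by
  have h1 : HasSum (fun j => occ p 0 k (j+1) * r ^ (j+1)) (S - occ p 0 k 0) := by
    rw [hasSum_nat_add_iff (f := fun j => occ p 0 k j * r ^ j) 1]
    simpa using hS
  have h2 : HasSum (fun j => (1/2) * occ p 0 k (j+1) * r ^ j)
      ((S - occ p 0 k 0) * (1 / (2 * r))) := by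
    refine (h1.mul_right (1 / (2*r))).congr_fun ?_
    intro j
    field_simp
    ring
  let ν : ℕ → ℝ := fun j => match j with
    | 0 => 0
    | 1 => 0
    | j+2 => (1/2) * occ p 0 k (j+1) * r ^ (j+2)
  have h3 : HasSum ν ((S - occ p 0 k 0) * (r / 2)) := by
    have := (hasSum_nat_add_iff (f := ν) (g := (S - occ p 0 k 0) * (r / 2)) 2).1 (by
      refine (h1.mul_right (r/2)).congr_fun ?_
      intro j
      simp only [ν]
      ring)
    simpa [Finset.sum_range_succ, ν] using this
  have h4 := ((hG.mul_left (occ p 0 k 0)).add h2).add h3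
  have e : occ p 0 k 0 * G + (S - occ p 0 k 0) * ((1 + r ^ 2) / (2 * r)) =
      occ p 0 k 0 * G + (S - occ p 0 k 0) * (1 / (2 * r)) + (S - occ p 0 k 0) * (r / 2) := by
    field_simp
    ring
  rw [e]
  refine h4.congr_fun ?_
  · intro j
    rcases j with _ | _ | j
    · simp [occ_succ_zero, ν]
    · simp [occ_succ_one, ν]; ring
    · simp only [occ_succ_two, ν]; ring

lemma occ_nonneg (p : ℕ → ℝ) (hp0 : ∀ j, 0 ≤ p j) (k j : ℕ) : 0 ≤ occ p 0 k j := by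
  induction k generalizing j with
  | zero => simp only [occ]; split_ifs <;> norm_num
  | succ k ih =>
    refine tsum_nonneg fun i => mul_nonneg (ih i) ?_
    rcases i with _ | i
    · exact hp0 j
    · simp only [Ptrans]; split_ifs <;> norm_num

lemma occ_mass (p : ℕ → ℝ) (hp0 : ∀ j, 0 ≤ p j) (hpsum : Summable p)
    (hp1 : ∑' j : ℕ, p j ≤ 1) (k : ℕ) :
    ∃ S ≤ 1, HasSum (fun j => occ p 0 k j) S := by
  induction k with
  | zero => exact ⟨1, le_rfl, by simpa [occ] using hasSum_ite_eq (0:ℕ) (1:ℝ)⟩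
  | succ k ih =>
    obtain ⟨S, h1, hS⟩ := ih
    have := occ_step p k 1 (∑' j, p j) S one_pos (by simpa using hpsum.hasSum) (by simpa using hS)
    refine ⟨_, ?_, by simpa only [one_pow, mul_one] using this⟩
    have := mul_le_mul_of_nonneg_left hp1 (occ_nonneg p hp0 k 0)
    norm_num
    linarith

/-- The generating function `F(x) = ∑ₖ aₖ xᵏ` of the occupation probabilities
`aₖ = μₖ(0)` of the boundary random walk started at `0` converges for
`x ∈ (0,1)` and equals `1 / (1 - x ∑ₖ 𝔭ₖ ((1 - √(1 - x²))/x)ᵏ)`. -/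
theorem stmt1 (p : ℕ → ℝ) (hp0 : ∀ j, 0 ≤ p j) (hpsum : Summable p)
    (hp1 : ∑' j : ℕ, p j ≤ 1) (x : ℝ) (hx : x ∈ Set.Ioo (0 : ℝ) 1) :
    Summable (fun k : ℕ => occ p 0 k 0 * x ^ k) ∧
      ∑' k : ℕ, occ p 0 k 0 * x ^ k =
        1 / (1 - x * ∑' k : ℕ, p k * ((1 - Real.sqrt (1 - x ^ 2)) / x) ^ k) := by
  obtain ⟨hx0, hx1⟩ := hx
  set r := (1 - Real.sqrt (1 - x ^ 2)) / x with hr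
  have hs0 := Real.sqrt_nonneg (1 - x^2)
  have hs : Real.sqrt (1 - x^2) ^ 2 = 1 - x^2 := Real.sq_sqrt (by nlinarith)
  have hxr : x * r = 1 - Real.sqrt (1 - x^2) := by rw [hr]; field_simp
  have hr0 : 0 < r := by
    have : 0 < x * r := by rw [hxr]; nlinarith
    exact (pos_iff_pos_of_mul_pos this).1 hx0
  have hq : x * (1 + r^2) = 2 * r := by
    have h : Real.sqrt (1 - x^2) = 1 - x * r := by linarith
    rw [h] at hs
    have : x * (x * (1 + r^2) - 2 * r) = 0 := by linarith
    rcases mul_eq_zero.1 this with h | h <;> linarith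
  have hr1 : r ≤ 1 := by
    have h : 0 ≤ 1 - x * r := by linarith
    by_contra hc
    nlinarith
  have hle : ∀ k, r ^ k ≤ 1 := fun k => pow_le_one₀ hr0.le hr1
  have hGs : Summable (fun k => p k * r ^ k) :=
    Summable.of_nonneg_of_le (fun k => mul_nonneg (hp0 k) (by positivity))
      (fun k => mul_le_of_le_one_right (hp0 k) (hle k)) hpsum
  set G := ∑' k, p k * r ^ k with hGdef
  have hG1 : G ≤ 1 := (hGs.tsum_le_tsum
    (fun k => mul_le_of_le_one_right (hp0 k) (hle k)) hpsum).trans hp1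
  have hpos : 0 < 1 - x * G := by nlinarith
  have hcoef : (1 + r^2) / (2 * r) = 1 / x := by
    field_simp; linarith
  have key : ∀ n, ∃ S, HasSum (fun j => occ p 0 n j * r ^ j) S ∧
      (∑ k ∈ Finset.range n, occ p 0 k 0 * x ^ k) * (1 - x * G) = 1 - x ^ n * S := by
    intro n
    induction n with
    | zero =>
      refine ⟨1, ?_, by simp⟩
      convert hasSum_ite_eq (0:ℕ) (1:ℝ) using 2 with j
      simp only [occ]
      split_ifs with h <;> simp [h]
    | succ n ih =>
      obtain ⟨S, hS, he⟩ := ih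
      refine ⟨_, occ_step p n r G S hr0 hGs.hasSum hS, ?_⟩
      rw [Finset.sum_range_succ, add_mul, he, hcoef]
      field_simp
      ring
  choose S hS he using key
  have hS0 : ∀ n, 0 ≤ S n := fun n =>
    (hS n).nonneg fun j => mul_nonneg (occ_nonneg p hp0 n j) (by positivity)
  have hS1 : ∀ n, S n ≤ 1 := fun n => by
    obtain ⟨M, hM, hMs⟩ := occ_mass p hp0 hpsum hp1 n
    exact (hasSum_le (fun j => mul_le_of_le_one_right (occ_nonneg p hp0 n j) (hle j))
      (hS n) hMs).trans hM
  have hlim : Filter.Tendsto (fun n => x ^ n * S n) Filter.atTop (nhds 0) :=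
    squeeze_zero (fun n => mul_nonneg (by positivity) (hS0 n))
      (fun n => mul_le_of_le_one_right (by positivity) (hS1 n))
      (tendsto_pow_atTop_nhds_zero_of_lt_one hx0.le hx1)
  have hsum : HasSum (fun k : ℕ => occ p 0 k 0 * x ^ k) (1 / (1 - x * G)) := by
    rw [hasSum_iff_tendsto_nat_of_nonneg
      (fun k => mul_nonneg (occ_nonneg p hp0 k 0) (by positivity))]
    have h := (hlim.const_sub 1).div_const (1 - x * G)
    rw [sub_zero] at h
    refine h.congr fun n => ?_
    rw [← he n, mul_div_cancel_right₀ _ hpos.ne']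
  exact ⟨hsum.summable, hsum.tsum_eq⟩
end

section
/- Let p₁, p₂ ≥ 0 and p₃ > 0 be constants, and let μ be a nonnegative Borel measure on ℝ carried by (0,∞) with I := ∫_{(0,∞)} min(x,1) dμ(x) < ∞. Let f : ℝ → ℝ satisfy |f(x)| ≤ F₀ for all x ≥ 0 and |f(x) − f(y)| ≤ F₁ |x − y| for all x, y ≥ 0. For each integer n ≥ 2 define D_n := −(p₁/(n² p₃)) f(0) + (p₂/(n p₃)) (f(1/n) − f(0)) + Σ_{j=2}^{n²−1} (μ((j/n,(j+1)/n])/(n² p₃)) (f(j/n) − f(0)). Then |D_n| ≤ (p₁ F₀ + p₂ F₁ + (2F₀ + F₁) I)/(n² p₃). -/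
open MeasureTheory

/-- Boundary estimate for the generator of the rescaled boundary random walk
(case `p₃ ≠ 0`): with `D_n := -(p₁/(n²p₃)) f(0) + (p₂/(np₃))(f(1/n) - f(0))
+ ∑_{j=2}^{n²-1} (μ((j/n,(j+1)/n])/(n²p₃))(f(j/n) - f(0))`, one has
`|D_n| ≤ (p₁F₀ + p₂F₁ + (2F₀+F₁)∫min(x,1)dμ)/(n²p₃)`. -/
theorem stmt8 (p₁ p₂ p₃ : ℝ) (hp₁ : 0 ≤ p₁) (hp₂ : 0 ≤ p₂) (hp₃ : 0 < p₃)
    (μ : Measure ℝ) (hcar : μ (Set.Iic 0) = 0)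
    (hI : IntegrableOn (fun x => min x 1) (Set.Ioi 0) μ)
    (f : ℝ → ℝ) (F₀ F₁ : ℝ)
    (hF₀ : ∀ x : ℝ, 0 ≤ x → |f x| ≤ F₀)
    (hF₁ : ∀ x y : ℝ, 0 ≤ x → 0 ≤ y → |f x - f y| ≤ F₁ * |x - y|)
    (n : ℕ) (hn : 2 ≤ n) :
    |(-(p₁ / ((n : ℝ) ^ 2 * p₃)) * f 0
        + p₂ / ((n : ℝ) * p₃) * (f (1 / (n : ℝ)) - f 0)
        + ∑ j ∈ Finset.Icc (2 : ℕ) (n ^ 2 - 1),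
            (μ (Set.Ioc ((j : ℝ) / (n : ℝ)) (((j : ℝ) + 1) / (n : ℝ)))).toReal /
                ((n : ℝ) ^ 2 * p₃) * (f ((j : ℝ) / (n : ℝ)) - f 0))|
      ≤ (p₁ * F₀ + p₂ * F₁ + (2 * F₀ + F₁) * ∫ x in Set.Ioi (0 : ℝ), min x 1 ∂μ) /
          ((n : ℝ) ^ 2 * p₃) := by
  have hn0 : (0 : ℝ) < n := by exact_mod_cast (by omega : 0 < n)
  have hF0 : 0 ≤ F₀ := (abs_nonneg _).trans (hF₀ 0 le_rfl)
  have hF1 : 0 ≤ F₁ := by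
    have h := (abs_nonneg _).trans (hF₁ 1 0 zero_le_one le_rfl)
    simpa using h
  have hK : 0 < (n : ℝ) ^ 2 * p₃ := by positivity
  set A : ℕ → Set ℝ := fun j => Set.Ioc ((j : ℝ) / (n : ℝ)) (((j : ℝ) + 1) / (n : ℝ)) with hA
  have hsub : ∀ j, A j ⊆ Set.Ioi 0 := by
    intro j x hx
    exact lt_of_le_of_lt (by positivity : (0 : ℝ) ≤ (j : ℝ) / n) hx.1
  have hmeas : ∀ j, MeasurableSet (A j) := fun j => measurableSet_Ioc
  have hnn : ∀ j, 0 ≤ ∫ x in A j, min x 1 ∂μ := by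
    intro j
    apply setIntegral_nonneg (hmeas j)
    intro x hx
    exact le_min (le_of_lt (hsub j hx)) zero_le_one
  -- mass bound on each cell
  have hcell : ∀ j : ℕ, min ((j : ℝ) / n) 1 * (μ (A j)).toReal ≤ ∫ x in A j, min x 1 ∂μ := by
    intro j
    by_cases ht : μ (A j) = ⊤
    · rw [ht]; simpa using hnn j
    · have h := setIntegral_mono_on (μ := μ) (s := A j)
        (f := fun _ => min ((j : ℝ) / n) 1) (g := fun x => min x 1)
        (integrableOn_const ht) (hI.mono_set (hsub j)) (hmeas j)
        (fun x hx => min_le_min_right 1 hx.1.le)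
      rw [setIntegral_const, smul_eq_mul, mul_comm] at h
      exact h
  have hfb : ∀ j : ℕ, |f ((j : ℝ) / n) - f 0| ≤ (2 * F₀ + F₁) * min ((j : ℝ) / n) 1 := by
    intro j
    have hx : (0 : ℝ) ≤ (j : ℝ) / n := by positivity
    rcases le_total ((j : ℝ) / n) 1 with h | h
    · rw [min_eq_left h]
      have := hF₁ _ 0 hx le_rfl
      rw [sub_zero, abs_of_nonneg hx] at this
      nlinarith
    · rw [min_eq_right h]
      have h1 := abs_sub (f ((j : ℝ) / n)) (f 0)
      have h2 := hF₀ _ hx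
      have h3 := hF₀ 0 le_rfl
      linarith
  have hdisj : Pairwise (Function.onFun Disjoint A) := by
    have key : ∀ i j : ℕ, i < j → Disjoint (A i) (A j) := by
      intro i j hij
      rw [Set.disjoint_left]
      intro x hx hy
      have h1 : ((i : ℝ) + 1) / n ≤ (j : ℝ) / n := by
        gcongr
        exact_mod_cast hij
      exact absurd (hx.2.trans h1) (not_le.mpr hy.1)
    intro i j hij
    rcases lt_or_gt_of_ne hij with h | h
    · exact key i j h
    · exact (key j i h).symm
  have hsum : ∑ j ∈ Finset.Icc (2 : ℕ) (n ^ 2 - 1), ∫ x in A j, min x 1 ∂μ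
      ≤ ∫ x in Set.Ioi (0 : ℝ), min x 1 ∂μ := by
    rw [← integral_biUnion_finset _ (fun j _ => hmeas j) (fun i _ j _ hij => hdisj hij)
      (fun j _ => hI.mono_set (hsub j))]
    apply setIntegral_mono_set hI
    · filter_upwards [ae_restrict_mem measurableSet_Ioi] with x hx
      exact le_min (le_of_lt hx) zero_le_one
    · exact (Set.iUnion₂_subset fun j _ => hsub j).eventuallyLE
  have t1 : |-(p₁ / ((n : ℝ) ^ 2 * p₃)) * f 0| ≤ p₁ * F₀ / ((n : ℝ) ^ 2 * p₃) := by
    rw [abs_mul, abs_neg, abs_of_nonneg (by positivity), div_mul_eq_mul_div]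
    gcongr
    exact hF₀ 0 le_rfl
  have t2 : |p₂ / ((n : ℝ) * p₃) * (f (1 / (n : ℝ)) - f 0)| ≤ p₂ * F₁ / ((n : ℝ) ^ 2 * p₃) := by
    have hx : (0 : ℝ) ≤ 1 / n := by positivity
    have h := hF₁ _ 0 hx le_rfl
    rw [sub_zero, abs_of_nonneg hx] at h
    rw [abs_mul, abs_of_nonneg (by positivity)]
    calc _ ≤ p₂ / ((n : ℝ) * p₃) * (F₁ * (1 / n)) := by gcongr
      _ = _ := by field_simp
  have t3 : |∑ j ∈ Finset.Icc (2 : ℕ) (n ^ 2 - 1),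
      (μ (A j)).toReal / ((n : ℝ) ^ 2 * p₃) * (f ((j : ℝ) / (n : ℝ)) - f 0)|
      ≤ (2 * F₀ + F₁) * (∫ x in Set.Ioi (0 : ℝ), min x 1 ∂μ) / ((n : ℝ) ^ 2 * p₃) := by
    calc _ ≤ ∑ j ∈ Finset.Icc (2 : ℕ) (n ^ 2 - 1),
          (2 * F₀ + F₁) * (∫ x in A j, min x 1 ∂μ) / ((n : ℝ) ^ 2 * p₃) := by
          refine (Finset.abs_sum_le_sum_abs _ _).trans (Finset.sum_le_sum fun j _ => ?_)
          rw [abs_mul, abs_of_nonneg (by positivity), div_mul_eq_mul_div]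
          refine div_le_div_of_nonneg_right ?_ hK.le
          calc _ ≤ (μ (A j)).toReal * ((2 * F₀ + F₁) * min ((j : ℝ) / n) 1) := by
                gcongr
                exact hfb j
            _ = (2 * F₀ + F₁) * (min ((j : ℝ) / n) 1 * (μ (A j)).toReal) := by ring
            _ ≤ _ := by
                gcongr
                exact hcell j
      _ = (2 * F₀ + F₁) * (∑ j ∈ Finset.Icc (2 : ℕ) (n ^ 2 - 1), ∫ x in A j, min x 1 ∂μ)
          / ((n : ℝ) ^ 2 * p₃) := by
          rw [Finset.mul_sum, Finset.sum_div]
      _ ≤ _ := by gcongr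
  rw [add_div, add_div]
  refine (abs_add_le _ _).trans (add_le_add ((abs_add_le _ _).trans (add_le_add t1 t2)) t3)
end

section
/- Let p₁, p₂ ≥ 0 and p₃ > 0 be constants, and let μ be a nonnegative Borel measure on ℝ carried by (0,∞) with ∫_{(0,∞)} min(x,1) dμ(x) < ∞. Let f : ℝ → ℝ be continuous on [0,∞), satisfy |f(x) − f(0)| ≤ C min(x,1) for all x ≥ 0 for some constant C, and be right-differentiable at 0 with right derivative f'(0). For each integer n ≥ 2 define D_n := −(p₁/(n² p₃)) f(0) + (p₂/(n p₃)) (f(1/n) − f(0)) + Σ_{j=2}^{n²−1} (μ((j/n,(j+1)/n])/(n² p₃)) (f(j/n) − f(0)). Then lim_{n→∞} n² D_n = (−p₁ f(0) + p₂ f'(0) + ∫_{(0,∞)} (f(x) − f(0)) dμ(x)) / p₃. -/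
open MeasureTheory

lemma aux_sum (f : ℝ → ℝ) (n : ℕ) (hn : 0 < n) (x : ℝ) (hx : 0 < x) (S : Finset ℕ) :
    ∑ j ∈ S, (Set.Ioc ((j : ℝ) / (n : ℝ)) (((j : ℝ) + 1) / (n : ℝ))).indicator
      (fun _ => f ((j : ℝ) / (n : ℝ)) - f 0) x
    = if (⌈(n : ℝ) * x⌉₊ - 1) ∈ S then
        f (((⌈(n : ℝ) * x⌉₊ - 1 : ℕ) : ℝ) / (n : ℝ)) - f 0 else 0 := by
  have hn' : (0 : ℝ) < n := by exact_mod_cast hn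
  have hpos : 0 < ⌈(n : ℝ) * x⌉₊ := Nat.ceil_pos.2 (by positivity)
  rw [← Finset.sum_ite_eq S (⌈(n : ℝ) * x⌉₊ - 1) (fun j : ℕ => f ((j : ℝ) / (n : ℝ)) - f 0)]
  refine Finset.sum_congr rfl fun j _ => ?_
  rw [Set.indicator_apply]
  refine if_congr ?_ rfl rfl
  rw [Set.mem_Ioc, div_lt_iff₀ hn', le_div_iff₀ hn', mul_comm x]
  have h1 : (j : ℝ) < n * x ↔ j < ⌈(n : ℝ) * x⌉₊ := Nat.lt_ceil.symm
  have h2 : (n : ℝ) * x ≤ (j : ℝ) + 1 ↔ ⌈(n : ℝ) * x⌉₊ ≤ j + 1 := by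
    rw [Nat.ceil_le]; push_cast; rfl
  rw [h1, h2]
  omega

lemma aux_lim (μ : Measure ℝ)
    (hI : IntegrableOn (fun x => min x 1) (Set.Ioi 0) μ)
    (f : ℝ → ℝ) (hf : ContinuousOn f (Set.Ici 0))
    (C : ℝ) (hdom : ∀ x : ℝ, 0 ≤ x → |f x - f 0| ≤ C * min x 1) :
    Filter.Tendsto
      (fun n : ℕ => ∑ j ∈ Finset.Icc (2 : ℕ) (n ^ 2 - 1),
              (μ (Set.Ioc ((j : ℝ) / (n : ℝ)) (((j : ℝ) + 1) / (n : ℝ)))).toReal *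
                (f ((j : ℝ) / (n : ℝ)) - f 0))
      Filter.atTop (nhds (∫ x in Set.Ioi (0 : ℝ), (f x - f 0) ∂μ)) := by
  have hC : 0 ≤ C := by
    have := hdom 1 zero_le_one
    have h2 := abs_nonneg (f 1 - f 0)
    simp at this
    linarith
  have hfin : ∀ a b : ℝ, 0 < a → μ (Set.Ioc a b) < ⊤ := by
    intro a b ha
    have h0 : 0 < min a 1 := lt_min ha one_pos
    have := hI.measure_gt_lt_top (ε := min a 1 / 2) (by positivity)
    refine lt_of_le_of_lt ?_ this
    rw [Measure.restrict_apply' measurableSet_Ioi]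
    refine measure_mono fun x hx => ⟨?_, ha.trans hx.1⟩
    have : min a 1 ≤ min x 1 := min_le_min_right _ hx.1.le
    show min a 1 / 2 < min x 1
    linarith
  have key : Filter.Tendsto (fun n : ℕ => ∫ x in Set.Ioi (0 : ℝ),
      (∑ j ∈ Finset.Icc (2 : ℕ) (n ^ 2 - 1),
        (Set.Ioc ((j : ℝ) / (n : ℝ)) (((j : ℝ) + 1) / (n : ℝ))).indicator
          (fun _ => f ((j : ℝ) / (n : ℝ)) - f 0) x) ∂μ) Filter.atTop
      (nhds (∫ x in Set.Ioi (0 : ℝ), (f x - f 0) ∂μ)) := by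
    refine tendsto_integral_filter_of_dominated_convergence (fun x => C * min x 1) ?_ ?_
      (hI.const_mul C) ?_
    · refine Filter.Eventually.of_forall fun n => ?_
      refine Measurable.aestronglyMeasurable ?_
      exact Finset.measurable_sum _ fun j _ => measurable_const.indicator measurableSet_Ioc
    · filter_upwards [Filter.eventually_gt_atTop 0] with n hn
      filter_upwards [ae_restrict_mem measurableSet_Ioi] with x hx
      have hx : 0 < x := hx
      have hn' : (0 : ℝ) < n := by exact_mod_cast hn
      rw [aux_sum f n hn x hx]
      split_ifs with h
      · refine (hdom _ (by positivity)).trans ?_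
        refine mul_le_mul_of_nonneg_left (min_le_min_right _ ?_) hC
        rw [div_le_iff₀ hn', mul_comm x]
        have hpos : 0 < ⌈(n : ℝ) * x⌉₊ := Nat.ceil_pos.2 (by positivity)
        exact (Nat.lt_ceil.1 (by omega)).le
      · rw [norm_zero]
        have : 0 ≤ min x 1 := le_min hx.le zero_le_one
        positivity
    · filter_upwards [ae_restrict_mem measurableSet_Ioi] with x hx
      have hx : 0 < x := hx
      have hlim : Filter.Tendsto (fun n : ℕ => ((⌈(n : ℝ) * x⌉₊ - 1 : ℕ) : ℝ) / (n : ℝ))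
          Filter.atTop (nhds x) := by
        have hl : Filter.Tendsto (fun n : ℕ => x - 1 / (n : ℝ)) Filter.atTop (nhds x) := by
          simpa using tendsto_const_nhds.sub (tendsto_one_div_atTop_nhds_zero_nat (𝕜 := ℝ))
        refine tendsto_of_tendsto_of_tendsto_of_le_of_le' hl tendsto_const_nhds ?_ ?_
        · filter_upwards [Filter.eventually_gt_atTop 0] with n hn
          have hn' : (0 : ℝ) < n := by exact_mod_cast hn
          have hpos : 0 < ⌈(n : ℝ) * x⌉₊ := Nat.ceil_pos.2 (by positivity)
          rw [le_div_iff₀ hn', sub_mul, one_div, inv_mul_cancel₀ hn'.ne', Nat.cast_sub hpos]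
          have := Nat.le_ceil ((n : ℝ) * x)
          push_cast
          linarith
        · filter_upwards [Filter.eventually_gt_atTop 0] with n hn
          have hn' : (0 : ℝ) < n := by exact_mod_cast hn
          have hpos : 0 < ⌈(n : ℝ) * x⌉₊ := Nat.ceil_pos.2 (by positivity)
          rw [div_le_iff₀ hn', mul_comm x]
          exact (Nat.lt_ceil.1 (by omega)).le
      have hfx : ContinuousAt f x := hf.continuousAt (Ici_mem_nhds hx)
      have h2 := (hfx.tendsto.comp hlim).sub_const (f 0)
      refine h2.congr' ?_
      filter_upwards [Filter.eventually_gt_atTop 0, Filter.eventually_ge_atTop ⌈x⌉₊,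
        Filter.eventually_gt_atTop ⌈2 / x⌉₊] with n hn hnx hn2
      have hn' : (0 : ℝ) < n := by exact_mod_cast hn
      rw [aux_sum f n hn x hx, if_pos]
      · rfl
      · have hnx' : x ≤ n := Nat.ceil_le.1 hnx
        have hn2' : 2 / x < n := Nat.lt_of_ceil_lt hn2
        rw [div_lt_iff₀ hx] at hn2'
        have a1 : 2 < ⌈(n : ℝ) * x⌉₊ := Nat.lt_ceil.2 (by exact_mod_cast hn2')
        have a2 : ⌈(n : ℝ) * x⌉₊ ≤ n ^ 2 := Nat.ceil_le.2 (by push_cast; nlinarith)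
        rw [Finset.mem_Icc]
        omega
  refine key.congr' ?_
  filter_upwards [Filter.eventually_gt_atTop 0] with n hn
  have hn' : (0 : ℝ) < n := by exact_mod_cast hn
  have hj : ∀ j ∈ Finset.Icc (2 : ℕ) (n ^ 2 - 1), (0 : ℝ) < (j : ℝ) / n := by
    intro j hj
    have : 0 < j := by have := (Finset.mem_Icc.1 hj).1; omega
    positivity
  have hsub : ∀ j ∈ Finset.Icc (2 : ℕ) (n ^ 2 - 1),
      (μ.restrict (Set.Ioi 0)) (Set.Ioc ((j : ℝ) / (n : ℝ)) (((j : ℝ) + 1) / (n : ℝ)))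
      = μ (Set.Ioc ((j : ℝ) / (n : ℝ)) (((j : ℝ) + 1) / (n : ℝ))) := by
    intro j h
    rw [Measure.restrict_apply' measurableSet_Ioi, Set.inter_eq_left.2]
    exact fun x hx => (hj j h).trans hx.1
  rw [integral_finsetSum]
  · refine Finset.sum_congr rfl fun j h => ?_
    rw [integral_indicator_const _ measurableSet_Ioc, Measure.real, hsub j h, smul_eq_mul]
  · intro j h
    rw [integrable_indicator_iff measurableSet_Ioc]
    refine integrableOn_const ?_
    rw [hsub j h]
    exact (hfin _ _ (hj j h)).ne


/-- Convergence of the rescaled generator at the boundary (case `p₃ ≠ 0`):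
`n² D_n → (-p₁ f(0) + p₂ f'(0) + ∫_{(0,∞)} (f(x) - f(0)) dμ)/p₃`, where
`D_n := -(p₁/(n²p₃)) f(0) + (p₂/(np₃))(f(1/n) - f(0))
+ ∑_{j=2}^{n²-1} (μ((j/n,(j+1)/n])/(n²p₃))(f(j/n) - f(0))`. -/
theorem stmt12 (p₁ p₂ p₃ : ℝ) (hp₁ : 0 ≤ p₁) (hp₂ : 0 ≤ p₂) (hp₃ : 0 < p₃)
    (μ : Measure ℝ) (hcar : μ (Set.Iic 0) = 0)
    (hI : IntegrableOn (fun x => min x 1) (Set.Ioi 0) μ)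
    (f : ℝ → ℝ) (hf : ContinuousOn f (Set.Ici 0))
    (C : ℝ) (hdom : ∀ x : ℝ, 0 ≤ x → |f x - f 0| ≤ C * min x 1)
    (f'0 : ℝ) (hder : HasDerivWithinAt f f'0 (Set.Ici 0) 0) :
    Filter.Tendsto
      (fun n : ℕ => (n : ℝ) ^ 2 *
        (-(p₁ / ((n : ℝ) ^ 2 * p₃)) * f 0
          + p₂ / ((n : ℝ) * p₃) * (f (1 / (n : ℝ)) - f 0)
          + ∑ j ∈ Finset.Icc (2 : ℕ) (n ^ 2 - 1),
              (μ (Set.Ioc ((j : ℝ) / (n : ℝ)) (((j : ℝ) + 1) / (n : ℝ)))).toReal /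
                  ((n : ℝ) ^ 2 * p₃) * (f ((j : ℝ) / (n : ℝ)) - f 0)))
      Filter.atTop
      (nhds ((-p₁ * f 0 + p₂ * f'0 + ∫ x in Set.Ioi (0 : ℝ), (f x - f 0) ∂μ) / p₃)) := by
  have hS := aux_lim μ hI f hf C hdom
  have hD : Filter.Tendsto (fun n : ℕ => (n : ℝ) * (f (1 / (n : ℝ)) - f 0))
      Filter.atTop (nhds f'0) := by
    rw [hasDerivWithinAt_iff_tendsto_slope] at hder
    have h1 : Filter.Tendsto (fun n : ℕ => 1 / (n : ℝ)) Filter.atTop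
        (nhdsWithin 0 (Set.Ici 0 \ {0})) := by
      rw [tendsto_nhdsWithin_iff]
      refine ⟨tendsto_one_div_atTop_nhds_zero_nat, ?_⟩
      filter_upwards [Filter.eventually_gt_atTop 0] with n hn
      have hn' : (0 : ℝ) < n := by exact_mod_cast hn
      have : (0 : ℝ) < 1 / n := by positivity
      exact ⟨this.le, this.ne'⟩
    refine (hder.comp h1).congr fun n => ?_
    simp [slope_def_field, div_eq_mul_inv, mul_comm]
  have hT := (((hD.const_mul p₂).const_add (-p₁ * f 0)).add hS).div_const p₃
  refine hT.congr' ?_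
  filter_upwards [Filter.eventually_gt_atTop 0] with n hn
  have hn' : (n : ℝ) ≠ 0 := by exact_mod_cast hn.ne'
  have hs : ∀ j ∈ Finset.Icc (2 : ℕ) (n ^ 2 - 1),
      (μ (Set.Ioc ((j : ℝ) / (n : ℝ)) (((j : ℝ) + 1) / (n : ℝ)))).toReal /
        ((n : ℝ) ^ 2 * p₃) * (f ((j : ℝ) / (n : ℝ)) - f 0)
      = ((μ (Set.Ioc ((j : ℝ) / (n : ℝ)) (((j : ℝ) + 1) / (n : ℝ)))).toReal *
        (f ((j : ℝ) / (n : ℝ)) - f 0)) / ((n : ℝ) ^ 2 * p₃) := fun j _ => by ring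
  rw [Finset.sum_congr rfl hs, ← Finset.sum_div]
  generalize (∑ j ∈ Finset.Icc (2 : ℕ) (n ^ 2 - 1), _ : ℝ) = S
  generalize f (1 / (n : ℝ)) = y
  field_simp
end

section
/- Let (𝔭_j)_{j∈ℕ} be nonnegative reals with Σ_{j=0}^∞ 𝔭_j ≤ 1, and let a_k := μ_k(0) be the occupation probabilities of 0 for the boundary random walk started at i₀ = 0. Then for every integer k ≥ 2, a_k = 𝔭₀ a_{k−1} + Σ_{i=1}^{k−1} 𝔭_i Σ_{j=0}^{⌊(k−i−1)/2⌋} a_{k−i−2j−1} · M_{i,j} / 2^{i+2j}, where M_{i,j} := (i/(i+2j)) · binom(i+2j, j) are the shifted Catalan numbers. -/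
/-- The shifted Catalan number `M_{i,j} = (i/(i+2j)) C(i+2j, j)`, as a real number. -/
noncomputable def Mcat (i j : ℕ) : ℝ :=
  (i : ℝ) / ((i : ℝ) + 2 * (j : ℝ)) * (Nat.choose (i + 2 * j) j : ℝ)

/-- First-hitting probabilities of `0` for the simple random walk. -/
noncomputable def Fhit : ℕ → ℕ → ℝ
  | 0, 0 => 1
  | 0, _ + 1 => 0
  | _ + 1, 0 => 0
  | i + 1, n + 1 => (Fhit i n + Fhit (i + 2) n) / 2

lemma Fhit_lt : ∀ (n i : ℕ), n < i → Fhit i n = 0 := by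
  intro n
  induction n with
  | zero => intro i hi; cases i with
    | zero => omega
    | succ i => simp [Fhit]
  | succ n ih => intro i hi; cases i with
    | zero => omega
    | succ i => simp [Fhit, ih i (by omega), ih (i + 2) (by omega)]

lemma Fhit_parity : ∀ (n i : ℕ), (n + i) % 2 = 1 → Fhit i n = 0 := by
  intro n
  induction n with
  | zero => intro i hi; cases i with
    | zero => omega
    | succ i => simp [Fhit]
  | succ n ih => intro i hi; cases i with
    | zero => simp [Fhit]
    | succ i => simp [Fhit, ih i (by omega), ih (i + 2) (by omega)]

lemma Mcat_zero (i : ℕ) : Mcat (i + 1) 0 = 1 := by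
  have : (i : ℝ) + 1 ≠ 0 := by positivity
  simp [Mcat, this]

lemma Mcat_rec (i j : ℕ) : Mcat (i + 1) (j + 1) = Mcat i (j + 1) + Mcat (i + 2) j := by
  have e1 : i + 1 + 2 * (j + 1) = (i + 2 * j + 2) + 1 := by ring
  have e2 : i + 2 * (j + 1) = i + 2 * j + 2 := by ring
  have e3 : i + 2 + 2 * j = i + 2 * j + 2 := by ring
  have h := Nat.choose_succ_right_eq (i + 2 * j + 2) j
  have e4 : i + 2 * j + 2 - j = i + j + 2 := by omega
  rw [e4] at h
  unfold Mcat
  rw [e1, e2, e3, Nat.choose_succ_succ]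
  have hB : ((i + 2 * j + 2).choose (j + 1) : ℝ)
      = (i + 2 * j + 2).choose j * (i + j + 2) / (j + 1) := by
    rw [eq_div_iff (by positivity)]
    exact_mod_cast h
  simp only [Nat.succ_eq_add_one]
  push_cast
  rw [hB]
  generalize ((i + 2 * j + 2).choose j : ℝ) = A
  have n1 : (i : ℝ) + 1 + 2 * (j + 1) ≠ 0 := by positivity
  have n2 : (i : ℝ) + 2 * (j + 1) ≠ 0 := by positivity
  have n3 : (i : ℝ) + 2 + 2 * j ≠ 0 := by positivity
  have n4 : (j : ℝ) + 1 ≠ 0 := by positivity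
  have e5 : (i : ℝ) + 2 + 2 * j = i + 2 * (j + 1) := by ring
  rw [e5]
  field_simp
  ring

lemma Fhit_eq : ∀ (n i j : ℕ), i + 1 + 2 * j = n →
    Fhit (i + 1) n = Mcat (i + 1) j / 2 ^ n := by
  intro n
  induction n with
  | zero => intro i j h; omega
  | succ n ih =>
    intro i j h
    rw [Fhit]
    cases j with
    | zero =>
      rw [Mcat_zero, Fhit_lt n (i + 2) (by omega)]
      cases i with
      | zero =>
        obtain rfl : n = 0 := by omega
        simp [Fhit]
      | succ i =>
        rw [ih i 0 (by omega), Mcat_zero]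
        rw [pow_succ]; field_simp; ring
    | succ j =>
      rw [Mcat_rec, ih (i + 1) j (by omega)]
      cases i with
      | zero =>
        obtain ⟨m, rfl⟩ : ∃ m, n = m + 1 := ⟨n - 1, by omega⟩
        simp [Fhit, Mcat]
        rw [pow_succ _ (m + 1)]; field_simp
      | succ i =>
        rw [ih i (j + 1) (by omega), pow_succ]; field_simp

lemma occ_succ_small (p : ℕ → ℝ) (k j : ℕ) (hj : j < 2) :
    occ p 0 (k + 1) j = occ p 0 k 0 * p j + occ p 0 k (j + 1) / 2 := by
  simp only [occ]
  rw [tsum_eq_sum (s := {0, j + 1})]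
  · rw [Finset.sum_pair (by omega)]
    simp [Ptrans]; ring
  · intro i hi
    simp only [Finset.mem_insert, Finset.mem_singleton, not_or] at hi
    cases i with
    | zero => omega
    | succ i => rw [Ptrans, if_neg (by omega), mul_zero]

lemma occ_succ_big (p : ℕ → ℝ) (k j : ℕ) :
    occ p 0 (k + 1) (j + 2) = occ p 0 k 0 * p (j + 2) + occ p 0 k (j + 3) / 2
      + occ p 0 k (j + 1) / 2 := by
  simp only [occ]
  rw [tsum_eq_sum (s := {0, j + 3, j + 1})]
  · rw [Finset.sum_insert (by simp), Finset.sum_pair (by omega)]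
    simp [Ptrans]; ring
  · intro i hi
    simp only [Finset.mem_insert, Finset.mem_singleton, not_or] at hi
    cases i with
    | zero => omega
    | succ i => rw [Ptrans, if_neg (by omega), mul_zero]

lemma H_aux (p : ℕ → ℝ) (k n K : ℕ) :
    ∑ j ∈ Finset.range (K + 2), occ p 0 (k + 1) j * Fhit j n
      = occ p 0 k 0 * ∑ j ∈ Finset.range (K + 2), p j * Fhit j n
        + ∑ j ∈ Finset.range (K + 2), occ p 0 k j * Fhit j (n + 1)
        + occ p 0 k (K + 2) * Fhit (K + 1) n / 2 - occ p 0 k (K + 1) * Fhit (K + 2) n / 2 := by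
  induction K with
  | zero =>
    simp only [zero_add, Finset.sum_range_succ, Finset.sum_range_zero,
      occ_succ_small p k 0 (by omega), occ_succ_small p k 1 (by omega)]
    rw [show Fhit 0 (n + 1) = 0 by simp [Fhit], show Fhit 1 (n + 1) = (Fhit 0 n + Fhit 2 n) / 2 by
      simp [Fhit]]
    ring
  | succ K ih =>
    rw [show K + 1 + 2 = (K + 2) + 1 by ring, Finset.sum_range_succ, ih, occ_succ_big,
      Finset.sum_range_succ _ (K + 2), Finset.sum_range_succ _ (K + 2), 
      show Fhit (K + 2) (n + 1) = (Fhit (K + 1) n + Fhit (K + 3) n) / 2 by simp [Fhit]]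
    ring_nf

lemma H_step (p : ℕ → ℝ) (k n K : ℕ) (h : n + 1 < K) :
    ∑ j ∈ Finset.range K, occ p 0 (k + 1) j * Fhit j n
      = occ p 0 k 0 * ∑ j ∈ Finset.range K, p j * Fhit j n
        + ∑ j ∈ Finset.range K, occ p 0 k j * Fhit j (n + 1) := by
  obtain ⟨K, rfl⟩ : ∃ L, K = L + 2 := ⟨K - 2, by omega⟩
  rw [H_aux, Fhit_lt n (K + 1) (by omega), Fhit_lt n (K + 2) (by omega)]
  ring

lemma H_iter (p : ℕ → ℝ) (K : ℕ) : ∀ (k n : ℕ), n + k < K →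
    ∑ j ∈ Finset.range K, occ p 0 k j * Fhit j n
      = ∑ m ∈ Finset.range k, occ p 0 (k - 1 - m) 0 * ∑ j ∈ Finset.range K, p j * Fhit j (n + m)
        + Fhit 0 (n + k) := by
  intro k
  induction k with
  | zero =>
    intro n h
    rw [Finset.sum_eq_single 0]
    · simp [occ]
    · intro b _ hb; simp [occ, hb]
    · intro h'; exact absurd (Finset.mem_range.2 (by omega)) h'
  | succ k ih =>
    intro n h
    rw [H_step p k n K (by omega), ih (n + 1) (by omega), Finset.sum_range_succ']
    have : ∀ m, k + 1 - 1 - (m + 1) = k - 1 - m := by intro m; omega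
    simp only [this]
    have e : ∀ m, n + 1 + m = n + (m + 1) := by intro m; ring
    simp only [e]
    simp
    ring

lemma fhit_inner_sum (a : ℕ → ℝ) (k i : ℕ) (hi : 1 ≤ i) (hik : i ≤ k - 1) :
    ∑ n ∈ Finset.range k, a (k - 1 - n) * Fhit i n
      = ∑ j ∈ Finset.range ((k - i - 1) / 2 + 1),
            a (k - i - 2 * j - 1) * Mcat i j / 2 ^ (i + 2 * j) := by
  symm
  apply Finset.sum_of_injOn (fun j => i + 2 * j)
  · intro x _ y _ h
    simp only at h
    omega
  · intro x hx
    simp only [Finset.coe_range, Set.mem_Iio] at hx ⊢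
    omega
  · intro n hn hn'
    simp only [Finset.coe_range, Set.mem_image, Set.mem_Iio, not_exists, not_and,
      Finset.mem_range] at hn hn'
    rcases lt_or_ge n i with h | h
    · rw [Fhit_lt n i h, mul_zero]
    · rcases Nat.mod_two_eq_zero_or_one (n + i) with h2 | h2
      · exact absurd (show i + 2 * ((n - i) / 2) = n by omega) (hn' _ (by omega))
      · rw [Fhit_parity n i h2, mul_zero]
  · intro j hj
    obtain ⟨i, rfl⟩ : ∃ l, i = l + 1 := ⟨i - 1, by omega⟩
    rw [Fhit_eq _ i j rfl, mul_div_assoc]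
    congr 2
    omega

/-- First-return decomposition of the occupation probabilities `aₖ = μₖ(0)` of the
boundary random walk started at `0`: for `k ≥ 2`,
`aₖ = 𝔭₀ a_{k-1} + ∑_{i=1}^{k-1} 𝔭ᵢ ∑_{j=0}^{⌊(k-i-1)/2⌋} a_{k-i-2j-1} M_{i,j}/2^{i+2j}`. -/
theorem stmt13 (p : ℕ → ℝ) (hp0 : ∀ j, 0 ≤ p j) (hpsum : Summable p)
    (hp1 : ∑' j : ℕ, p j ≤ 1) (k : ℕ) (hk : 2 ≤ k) :
    occ p 0 k 0 =
      p 0 * occ p 0 (k - 1) 0 +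
        ∑ i ∈ Finset.Icc 1 (k - 1), p i *
          ∑ j ∈ Finset.range ((k - i - 1) / 2 + 1),
            occ p 0 (k - i - 2 * j - 1) 0 * Mcat i j / 2 ^ (i + 2 * j) := by
  have h := H_iter p (k + 1) k 0 (by omega)
  have h0 : ∑ j ∈ Finset.range (k + 1), occ p 0 k j * Fhit j 0 = occ p 0 k 0 := by
    rw [Finset.sum_range_succ', Finset.sum_eq_zero]
    · simp [Fhit]
    · intro j _; simp [Fhit]
  have hF : Fhit 0 (0 + k) = 0 := by
    obtain ⟨m, rfl⟩ : ∃ m, k = m + 1 := ⟨k - 1, by omega⟩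
    simp [Fhit]
  rw [h0, hF, add_zero] at h
  rw [h]
  simp only [zero_add, Finset.mul_sum]
  rw [Finset.sum_comm]
  have hr : Finset.range (k + 1) = insert 0 (insert k (Finset.Icc 1 (k - 1))) := by
    ext x; simp; omega
  rw [hr, Finset.sum_insert (by simp; omega), Finset.sum_insert (by simp; omega)]
  congr 1
  · rw [Finset.sum_eq_single 0]
    · simp [Fhit]; ring
    · intro b _ hb
      obtain ⟨m, rfl⟩ : ∃ m, b = m + 1 := ⟨b - 1, by omega⟩
      simp [Fhit]
    · intro h'; exact absurd (Finset.mem_range.2 (by omega)) h'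
  · rw [Finset.sum_eq_zero, zero_add]
    · apply Finset.sum_congr rfl
      intro i hi
      rw [Finset.mem_Icc] at hi
      rw [← Finset.mul_sum, ← fhit_inner_sum (fun m => occ p 0 m 0) k i hi.1 hi.2, Finset.mul_sum]
      apply Finset.sum_congr rfl
      intro n _
      ring
    · intro n hn
      rw [Fhit_lt n k (Finset.mem_range.1 hn)]; simp
end

section
/- Let p₁ ≥ 0 and p₂ > 0 be constants, and let μ be a nonnegative Borel measure on ℝ carried by (0,∞) with I := ∫_{(0,∞)} min(x,1) dμ(x) < ∞. Let f : ℝ → ℝ satisfy |f(x)| ≤ F₀ for all x ≥ 0 and |f(x) − f(y)| ≤ F₁ |x − y| for all x, y ≥ 0. For an integer n ≥ 2, set 𝔭₁^{(n)} := 1 − p₁/(n p₂) − Σ_{j=2}^{n²−1} μ((j/n,(j+1)/n])/(n p₂), and assume 𝔭₁^{(n)} ≥ 0. Define D'_n := −(p₁/(n p₂)) f(0) + 𝔭₁^{(n)} (f(1/n) − f(0)) + Σ_{j=2}^{n²−1} (μ((j/n,(j+1)/n])/(n p₂)) (f(j/n) − f(0)). Then |D'_n| ≤ (p₁ F₀ +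 p₂ F₁ + (2F₀ + F₁) I)/(n p₂). -/
open MeasureTheory

/-- Boundary estimate for the generator of the rescaled boundary random walk
(case `p₂ ≠ 0`, `p₃ = 0`): with `𝔭₁⁽ⁿ⁾ = 1 - p₁/(np₂) - ∑_{j=2}^{n²-1} μ((j/n,(j+1)/n])/(np₂)`
assumed nonnegative, and `D'_n := -(p₁/(np₂)) f(0) + 𝔭₁⁽ⁿ⁾ (f(1/n) - f(0))
+ ∑_{j=2}^{n²-1}(μ((j/n,(j+1)/n])/(np₂))(f(j/n) - f(0))`, one has
`|D'_n| ≤ (p₁F₀ + p₂F₁ + (2F₀+F₁)∫min(x,1)dμ)/(np₂)`. -/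
theorem stmt16 (p₁ p₂ : ℝ) (hp₁ : 0 ≤ p₁) (hp₂ : 0 < p₂)
    (μ : Measure ℝ) (hcar : μ (Set.Iic 0) = 0)
    (hI : IntegrableOn (fun x => min x 1) (Set.Ioi 0) μ)
    (f : ℝ → ℝ) (F₀ F₁ : ℝ)
    (hF₀ : ∀ x : ℝ, 0 ≤ x → |f x| ≤ F₀)
    (hF₁ : ∀ x y : ℝ, 0 ≤ x → 0 ≤ y → |f x - f y| ≤ F₁ * |x - y|)
    (n : ℕ) (hn : 2 ≤ n)
    (hpos : 0 ≤ 1 - p₁ / ((n : ℝ) * p₂) -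
      (∑ j ∈ Finset.Icc (2 : ℕ) (n ^ 2 - 1),
        (μ (Set.Ioc ((j : ℝ) / (n : ℝ)) (((j : ℝ) + 1) / (n : ℝ)))).toReal) /
          ((n : ℝ) * p₂)) :
    |(-(p₁ / ((n : ℝ) * p₂)) * f 0
        + (1 - p₁ / ((n : ℝ) * p₂) -
            (∑ j ∈ Finset.Icc (2 : ℕ) (n ^ 2 - 1),
              (μ (Set.Ioc ((j : ℝ) / (n : ℝ)) (((j : ℝ) + 1) / (n : ℝ)))).toReal) /
                ((n : ℝ) * p₂)) * (f (1 / (n : ℝ)) - f 0)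
        + ∑ j ∈ Finset.Icc (2 : ℕ) (n ^ 2 - 1),
            (μ (Set.Ioc ((j : ℝ) / (n : ℝ)) (((j : ℝ) + 1) / (n : ℝ)))).toReal /
                ((n : ℝ) * p₂) * (f ((j : ℝ) / (n : ℝ)) - f 0))|
      ≤ (p₁ * F₀ + p₂ * F₁ + (2 * F₀ + F₁) * ∫ x in Set.Ioi (0 : ℝ), min x 1 ∂μ) /
          ((n : ℝ) * p₂) := by
  have hn0 : (0 : ℝ) < n := by
    have : 0 < n := by omega
    exact_mod_cast this
  have hnp : 0 < (n : ℝ) * p₂ := mul_pos hn0 hp₂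
  have hF₀0 : 0 ≤ F₀ := le_trans (abs_nonneg _) (hF₀ 0 le_rfl)
  have hF₁0 : 0 ≤ F₁ := by
    have h := hF₁ 1 0 zero_le_one le_rfl
    have h2 := abs_nonneg (f 1 - f 0)
    norm_num at h
    linarith
  set S : ℕ → Set ℝ := fun j => Set.Ioc ((j : ℝ) / (n : ℝ)) (((j : ℝ) + 1) / (n : ℝ)) with hS
  have hSsub : ∀ j, S j ⊆ Set.Ioi 0 := by
    intro j x hx
    have : (0 : ℝ) ≤ (j : ℝ) / n := by positivity
    exact lt_of_le_of_lt this hx.1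
  have hSm : ∀ j, MeasurableSet (S j) := fun j => measurableSet_Ioc
  have hterm : ∀ j : ℕ, (μ (S j)).toReal * min ((j : ℝ) / n) 1 ≤ ∫ x in S j, min x 1 ∂μ := by
    intro j
    have hj : (0 : ℝ) ≤ (j : ℝ) / n := by positivity
    by_cases hfin : μ (S j) = ⊤
    · rw [hfin]
      simp only [ENNReal.toReal_top, zero_mul]
      apply setIntegral_nonneg (hSm j)
      intro x hx
      exact le_min (le_of_lt (hSsub j hx)) zero_le_one
    · have h := setIntegral_mono_on (μ := μ) (s := S j) (f := fun _ => min ((j : ℝ) / n) 1)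
        (g := fun x => min x 1) (integrableOn_const hfin) (hI.mono_set (hSsub j)) (hSm j)
        (fun x hx => min_le_min_right 1 hx.1.le)
      rw [setIntegral_const, smul_eq_mul] at h
      exact h
  have hdisj : ∀ i j : ℕ, i < j → Disjoint (S i) (S j) := by
    intro i j hij
    rw [Set.disjoint_left]
    intro x hx hy
    have h1 : ((i : ℝ) + 1) / n ≤ (j : ℝ) / n := by
      have : (i : ℝ) + 1 ≤ j := by exact_mod_cast hij
      gcongr
    exact absurd (lt_of_lt_of_le hy.1 (hx.2.trans h1)) (lt_irrefl _)
  have hsum : ∑ j ∈ Finset.Icc (2 : ℕ) (n ^ 2 - 1), (μ (S j)).toReal * min ((j : ℝ) / n) 1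
      ≤ ∫ x in Set.Ioi (0 : ℝ), min x 1 ∂μ := by
    refine (Finset.sum_le_sum fun j _ => hterm j).trans ?_
    rw [← integral_biUnion_finset (Finset.Icc (2 : ℕ) (n ^ 2 - 1)) (fun j _ => hSm j)
      (fun i _ j _ hij => by
        rcases lt_or_gt_of_ne hij with h | h
        · exact hdisj i j h
        · exact (hdisj j i h).symm)
      (fun j _ => hI.mono_set (hSsub j))]
    apply setIntegral_mono_set hI
    · filter_upwards [ae_restrict_mem measurableSet_Ioi] with x hx
      exact le_min (le_of_lt hx) zero_le_one
    · exact (Set.iUnion₂_subset fun j _ => hSsub j).eventuallyLE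
  have hf : ∀ j : ℕ, |f ((j : ℝ) / n) - f 0| ≤ (2 * F₀ + F₁) * min ((j : ℝ) / n) 1 := by
    intro j
    have hj : (0 : ℝ) ≤ (j : ℝ) / n := by positivity
    rcases le_total ((j : ℝ) / n) 1 with h | h
    · rw [min_eq_left h]
      have := hF₁ _ 0 hj le_rfl
      rw [sub_zero, abs_of_nonneg hj] at this
      nlinarith
    · rw [min_eq_right h]
      have := abs_sub (f ((j : ℝ) / n)) (f 0)
      linarith [hF₀ _ hj, hF₀ 0 le_rfl]
  have hA : |-(p₁ / ((n : ℝ) * p₂)) * f 0| ≤ p₁ * F₀ / (n * p₂) := by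
    rw [abs_mul, abs_neg, abs_of_nonneg (by positivity), div_mul_eq_mul_div]
    gcongr
    exact hF₀ 0 le_rfl
  have hC : |∑ j ∈ Finset.Icc (2 : ℕ) (n ^ 2 - 1),
      (μ (S j)).toReal / ((n : ℝ) * p₂) * (f ((j : ℝ) / (n : ℝ)) - f 0)|
      ≤ (2 * F₀ + F₁) * (∫ x in Set.Ioi (0 : ℝ), min x 1 ∂μ) / (n * p₂) := by
    refine (Finset.abs_sum_le_sum_abs _ _).trans ?_
    calc _ ≤ ∑ j ∈ Finset.Icc (2 : ℕ) (n ^ 2 - 1),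
          (2 * F₀ + F₁) / (n * p₂) * ((μ (S j)).toReal * min ((j : ℝ) / n) 1) := by
          apply Finset.sum_le_sum
          intro j _
          rw [abs_mul, abs_of_nonneg (by positivity)]
          calc _ ≤ (μ (S j)).toReal / ((n : ℝ) * p₂) * ((2 * F₀ + F₁) * min ((j : ℝ) / n) 1) := by
                gcongr
                exact hf j
            _ = _ := by ring
      _ ≤ (2 * F₀ + F₁) / (n * p₂) * ∫ x in Set.Ioi (0 : ℝ), min x 1 ∂μ := by
          rw [← Finset.mul_sum]
          gcongr
      _ = _ := by ring
  have hle : 1 - p₁ / ((n : ℝ) * p₂) -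
      (∑ j ∈ Finset.Icc (2 : ℕ) (n ^ 2 - 1), (μ (S j)).toReal) / ((n : ℝ) * p₂) ≤ 1 := by
    have h1 : 0 ≤ p₁ / ((n : ℝ) * p₂) := by positivity
    have h2 : 0 ≤ (∑ j ∈ Finset.Icc (2 : ℕ) (n ^ 2 - 1), (μ (S j)).toReal) / ((n : ℝ) * p₂) := by
      positivity
    linarith
  have hB : |(1 - p₁ / ((n : ℝ) * p₂) -
      (∑ j ∈ Finset.Icc (2 : ℕ) (n ^ 2 - 1), (μ (S j)).toReal) / ((n : ℝ) * p₂))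
        * (f (1 / (n : ℝ)) - f 0)| ≤ p₂ * F₁ / (n * p₂) := by
    rw [abs_mul, abs_of_nonneg hpos]
    have h1n : (0 : ℝ) ≤ 1 / n := by positivity
    have h := hF₁ (1 / n) 0 h1n le_rfl
    rw [sub_zero, abs_of_nonneg h1n] at h
    have e : p₂ * F₁ / (n * p₂) = F₁ * (1 / n) := by field_simp
    rw [e]
    exact (mul_le_of_le_one_left (abs_nonneg _) hle).trans h
  rw [add_div, add_div]
  exact (abs_add_three _ _ _).trans (add_le_add (add_le_add hA hB) hC)
end

section
/- Let p₁ ≥ 0 and p₂ > 0 be constants, and let μ be a nonnegative Borel measure on ℝ carried by (0,∞) with ∫_{(0,∞)} min(x,1) dμ(x) < ∞. Let f : ℝ → ℝ be continuous on [0,∞), satisfy |f(x) − f(0)| ≤ C min(x,1) for all x ≥ 0 for some constant C, and be right-differentiable at 0 with right derivative f'(0). For each integer n ≥ 2 set 𝔭₁^{(n)} := 1 − p₁/(n p₂) − Σ_{j=2}^{n²−1} μ((j/n,(j+1)/n])/(n p₂) and D'_n := −(p₁/(n p₂)) f(0) + 𝔭₁^{(n)} (f(1/n) − f(0)) + Σ_{j=2}^{n²−1}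 (μ((j/n,(j+1)/n])/(n p₂)) (f(j/n) − f(0)). Then lim_{n→∞} n · D'_n = (−p₁ f(0) + p₂ f'(0) + ∫_{(0,∞)} (f(x) − f(0)) dμ(x)) / p₂. -/
open MeasureTheory Filter Topology

/-- The `j`-th interval of the grid with mesh `1/n`. -/
def gridI (n j : ℕ) : Set ℝ := Set.Ioc ((j : ℝ) / (n : ℝ)) (((j : ℝ) + 1) / (n : ℝ))

/-- The step function associated with coefficients `c`. -/
noncomputable def stepF (c : ℕ → ℕ → ℝ) (n : ℕ) (x : ℝ) : ℝ :=
  ∑ j ∈ Finset.Icc (2 : ℕ) (n ^ 2 - 1), (gridI n j).indicator (fun _ => c n j) x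

lemma gridI_unique {n j k : ℕ} (hn : 0 < n) {x : ℝ} (h1 : x ∈ gridI n j) (h2 : x ∈ gridI n k) :
    j = k := by
  have hn' : (0 : ℝ) < n := by exact_mod_cast hn
  obtain ⟨a1, a2⟩ := h1
  obtain ⟨b1, b2⟩ := h2
  rw [div_lt_iff₀ hn'] at a1 b1
  rw [le_div_iff₀ hn'] at a2 b2
  have h3 : (j : ℝ) < k + 1 := by linarith
  have h4 : (k : ℝ) < j + 1 := by linarith
  have h5 : j < k + 1 := by exact_mod_cast h3
  have h6 : k < j + 1 := by exact_mod_cast h4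
  omega

lemma stepF_eq (c : ℕ → ℕ → ℝ) {n j : ℕ} (hn : 0 < n) (hj : j ∈ Finset.Icc (2 : ℕ) (n ^ 2 - 1))
    {x : ℝ} (hx : x ∈ gridI n j) : stepF c n x = c n j := by
  unfold stepF
  rw [Finset.sum_eq_single j]
  · exact Set.indicator_of_mem hx _
  · intro k _ hk
    exact Set.indicator_of_notMem (fun h => hk (gridI_unique hn h hx)) _
  · intro h; exact absurd hj h

lemma exists_grid (x : ℝ) (hx : 0 < x) : ∃ k : ℕ → ℕ,
    ∀ᶠ n : ℕ in atTop, x ∈ gridI n (k n) ∧ k n ∈ Finset.Icc (2 : ℕ) (n ^ 2 - 1) := by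
  refine ⟨fun n => ⌈(n : ℝ) * x⌉₊ - 1, ?_⟩
  have h1 : ∀ᶠ n : ℕ in atTop, (3 : ℝ) ≤ n * x :=
    (tendsto_natCast_atTop_atTop.atTop_mul_const hx).eventually_ge_atTop 3
  have h2 : ∀ᶠ n : ℕ in atTop, x ≤ (n : ℝ) := tendsto_natCast_atTop_atTop.eventually_ge_atTop x
  filter_upwards [h1, h2, eventually_gt_atTop 0] with n h1 h2 hn
  have hn' : (0 : ℝ) < n := by exact_mod_cast hn
  have hpos : 0 ≤ (n : ℝ) * x := by positivity
  set m := ⌈(n : ℝ) * x⌉₊ with hm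
  have c1 : (n : ℝ) * x ≤ m := Nat.le_ceil _
  have c2 : (m : ℝ) < n * x + 1 := Nat.ceil_lt_add_one hpos
  have c3 : 3 ≤ m := by
    have : (3 : ℝ) ≤ m := h1.trans c1
    exact_mod_cast this
  have c4 : m ≤ n ^ 2 := by
    apply Nat.ceil_le.2
    push_cast
    nlinarith
  have c5 : ((m - 1 : ℕ) : ℝ) = m - 1 := by
    rw [Nat.cast_sub (by omega)]; simp
  refine ⟨⟨?_, ?_⟩, ?_⟩
  · rw [div_lt_iff₀ hn', c5]; linarith
  · rw [le_div_iff₀ hn', c5]; linarith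
  · rw [Finset.mem_Icc]; omega

lemma step_tendsto (μ : Measure ℝ) 
    (hI : IntegrableOn (fun x => min x 1) (Set.Ioi 0) μ)
    (c : ℕ → ℕ → ℝ) (G : ℝ → ℝ) (K : ℝ) (hK : 0 ≤ K)
    (hb : ∀ n j : ℕ, 0 < n → 2 ≤ j → ∀ x ∈ gridI n j, |c n j| ≤ K * min x 1)
    (hl : ∀ x : ℝ, 0 < x → ∀ k : ℕ → ℕ, (∀ᶠ n : ℕ in atTop, x ∈ gridI n (k n)) →
      Tendsto (fun n => c n (k n)) atTop (𝓝 (G x))) :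
    Tendsto (fun n : ℕ => ∑ j ∈ Finset.Icc (2 : ℕ) (n ^ 2 - 1), (μ (gridI n j)).toReal * c n j)
      atTop (𝓝 (∫ x in Set.Ioi (0 : ℝ), G x ∂μ)) := by
  have hmeas : ∀ n j, MeasurableSet (gridI n j) := fun n j => measurableSet_Ioc
  have hsub : ∀ n j, gridI n j ⊆ Set.Ioi 0 := by
    intro n j x hx
    exact lt_of_le_of_lt (by positivity) hx.1
  have hfin : ∀ n j : ℕ, 0 < n → 2 ≤ j → μ (gridI n j) < ⊤ := by
    intro n j hn hj
    have hn' : (0 : ℝ) < n := by exact_mod_cast hn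
    have hj' : (0 : ℝ) < j := by exact_mod_cast (by omega : 0 < j)
    have hε : 0 < min ((j : ℝ) / n) 1 := lt_min (by positivity) one_pos
    have := Integrable.measure_ge_lt_top hI hε
    rw [Measure.restrict_apply' measurableSet_Ioi] at this
    refine lt_of_le_of_lt (measure_mono ?_) this
    intro x hx
    exact ⟨min_le_min_right _ hx.1.le, hsub n j hx⟩
  have key : Tendsto (fun n : ℕ => ∫ x in Set.Ioi (0 : ℝ), stepF c n x ∂μ) atTop
      (𝓝 (∫ x in Set.Ioi (0 : ℝ), G x ∂μ)) := by
    refine tendsto_integral_filter_of_dominated_convergence (fun x => K * min x 1) ?_ ?_ 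
      (hI.const_mul K) ?_
    · refine Eventually.of_forall fun n => ?_
      apply Measurable.aestronglyMeasurable
      unfold stepF
      exact Finset.measurable_fun_sum _ fun j _ => measurable_const.indicator (hmeas n j)
    · filter_upwards [eventually_gt_atTop 0] with n hn
      filter_upwards [ae_restrict_mem measurableSet_Ioi] with x hx
      have hx : 0 < x := hx
      by_cases h : ∃ j ∈ Finset.Icc (2 : ℕ) (n ^ 2 - 1), x ∈ gridI n j
      · obtain ⟨j, hj, hxj⟩ := h
        rw [stepF_eq c hn hj hxj]
        exact hb n j hn (Finset.mem_Icc.1 hj).1 x hxj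
      · push Not at h
        have : stepF c n x = 0 :=
          Finset.sum_eq_zero fun j hj => Set.indicator_of_notMem (h j hj) _
        rw [this, norm_zero]
        positivity
    · filter_upwards [ae_restrict_mem measurableSet_Ioi] with x hx
      obtain ⟨k, hk⟩ := exists_grid x hx
      refine (hl x hx k (hk.mono fun n h => h.1)).congr' ?_
      filter_upwards [hk, eventually_gt_atTop 0] with n h hn
      exact (stepF_eq c hn h.2 h.1).symm
  refine key.congr' ?_
  filter_upwards [eventually_gt_atTop 0] with n hn
  unfold stepF
  rw [integral_finset_sum]
  · refine Finset.sum_congr rfl fun j _ => ?_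
    rw [integral_indicator_const _ (hmeas n j), smul_eq_mul, measureReal_def,
      Measure.restrict_apply (hmeas n j), Set.inter_eq_left.2 (hsub n j)]
  · intro j hj
    rw [integrable_indicator_iff (hmeas n j)]
    refine integrableOn_const ?_
    rw [Measure.restrict_apply (hmeas n j), Set.inter_eq_left.2 (hsub n j)]
    exact (hfin n j hn (Finset.mem_Icc.1 hj).1).ne

/-- Convergence of the rescaled generator at the boundary (case `p₂ ≠ 0`, `p₃ = 0`):
`n · D'_n → (-p₁ f(0) + p₂ f'(0) + ∫_{(0,∞)} (f(x) - f(0)) dμ)/p₂`, where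
`𝔭₁⁽ⁿ⁾ = 1 - p₁/(np₂) - ∑_{j=2}^{n²-1} μ((j/n,(j+1)/n])/(np₂)` and
`D'_n := -(p₁/(np₂)) f(0) + 𝔭₁⁽ⁿ⁾ (f(1/n) - f(0))
+ ∑_{j=2}^{n²-1}(μ((j/n,(j+1)/n])/(np₂))(f(j/n) - f(0))`. -/
theorem stmt17 (p₁ p₂ : ℝ) (hp₁ : 0 ≤ p₁) (hp₂ : 0 < p₂)
    (μ : Measure ℝ) (hcar : μ (Set.Iic 0) = 0)
    (hI : IntegrableOn (fun x => min x 1) (Set.Ioi 0) μ)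
    (f : ℝ → ℝ) (hf : ContinuousOn f (Set.Ici 0))
    (C : ℝ) (hdom : ∀ x : ℝ, 0 ≤ x → |f x - f 0| ≤ C * min x 1)
    (f'0 : ℝ) (hder : HasDerivWithinAt f f'0 (Set.Ici 0) 0) :
    Filter.Tendsto
      (fun n : ℕ => (n : ℝ) *
        (-(p₁ / ((n : ℝ) * p₂)) * f 0
          + (1 - p₁ / ((n : ℝ) * p₂) -
              (∑ j ∈ Finset.Icc (2 : ℕ) (n ^ 2 - 1),
                (μ (Set.Ioc ((j : ℝ) / (n : ℝ)) (((j : ℝ) + 1) / (n : ℝ)))).toReal) /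
                  ((n : ℝ) * p₂)) * (f (1 / (n : ℝ)) - f 0)
          + ∑ j ∈ Finset.Icc (2 : ℕ) (n ^ 2 - 1),
              (μ (Set.Ioc ((j : ℝ) / (n : ℝ)) (((j : ℝ) + 1) / (n : ℝ)))).toReal /
                  ((n : ℝ) * p₂) * (f ((j : ℝ) / (n : ℝ)) - f 0)))
      Filter.atTop
      (nhds ((-p₁ * f 0 + p₂ * f'0 + ∫ x in Set.Ioi (0 : ℝ), (f x - f 0) ∂μ) / p₂)) := by
  have hC : 0 ≤ C := by
    have := (abs_nonneg _).trans (hdom 1 zero_le_one)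
    simpa using this
  have hA := step_tendsto μ hI (fun n _ => 1 / (n : ℝ)) (fun _ => 0) 1 zero_le_one
    (by
      intro n j hn hj x hx
      have hn' : (1 : ℝ) ≤ n := by exact_mod_cast hn
      have hj' : (1 : ℝ) ≤ j := by exact_mod_cast (by omega : 1 ≤ j)
      rw [abs_of_nonneg (by positivity), one_mul]
      refine le_min (le_trans ?_ hx.1.le) ?_
      · gcongr
      · rw [div_le_one (by linarith)]; exact hn')
    (fun x _ k _ => tendsto_one_div_atTop_nhds_zero_nat)
  have hB := step_tendsto μ hI (fun n j => f ((j : ℝ) / n) - f 0) (fun x => f x - f 0) C hC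
    (by
      intro n j hn hj x hx
      refine (hdom _ (by positivity)).trans ?_
      exact mul_le_mul_of_nonneg_left (min_le_min_right _ hx.1.le) hC)
    (by
      intro x hx k hk
      have hlim : Tendsto (fun n : ℕ => (k n : ℝ) / n) atTop (𝓝 x) := by
        have h0 : Tendsto (fun n : ℕ => x - 1 / (n : ℝ)) atTop (𝓝 x) := by
          simpa using tendsto_const_nhds.sub (tendsto_one_div_atTop_nhds_zero_nat (𝕜 := ℝ))
        refine tendsto_of_tendsto_of_tendsto_of_le_of_le' h0 tendsto_const_nhds ?_ ?_
        · filter_upwards [hk] with n h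
          have := h.2
          rw [add_div] at this
          linarith
        · filter_upwards [hk] with n h using h.1.le
      have hc : ContinuousAt f x := hf.continuousAt (Ici_mem_nhds hx)
      exact (hc.tendsto.comp hlim).sub_const _)
  have hD : Tendsto (fun n : ℕ => (n : ℝ) * (f (1 / (n : ℝ)) - f 0)) atTop (𝓝 f'0) := by
    have h1 := (hasDerivWithinAt_iff_tendsto_slope.1 hder)
    have h2 : Tendsto (fun n : ℕ => 1 / (n : ℝ)) atTop (𝓝[Set.Ici 0 \ {0}] (0 : ℝ)) := by
      refine tendsto_nhdsWithin_iff.2 ⟨tendsto_one_div_atTop_nhds_zero_nat, ?_⟩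
      filter_upwards [eventually_gt_atTop 0] with n hn
      have hn' : (0 : ℝ) < n := by exact_mod_cast hn
      have : (0 : ℝ) < 1 / n := by positivity
      exact ⟨this.le, this.ne'⟩
    refine (h1.comp h2).congr fun n => ?_
    simp [slope_def_field, div_eq_mul_inv, mul_comm]
  have hE : Tendsto (fun n : ℕ => p₁ / p₂ * (1 / (n : ℝ))) atTop (𝓝 0) := by
    simpa using (tendsto_one_div_atTop_nhds_zero_nat (𝕜 := ℝ)).const_mul (p₁ / p₂)
  have hfinal := (((((hE.const_sub 1).sub (hA.div_const p₂)).mul hD).const_add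
    (-(p₁ / p₂) * f 0))).add (hB.div_const p₂)
  have hval : (-(p₁ / p₂) * f 0 + (1 - 0 - (∫ x in Set.Ioi (0 : ℝ), (0 : ℝ) ∂μ) / p₂) * f'0) +
      (∫ x in Set.Ioi (0 : ℝ), (f x - f 0) ∂μ) / p₂ =
      (-p₁ * f 0 + p₂ * f'0 + ∫ x in Set.Ioi (0 : ℝ), (f x - f 0) ∂μ) / p₂ := by
    rw [integral_zero]
    field_simp
    ring
  rw [hval] at hfinal
  refine hfinal.congr' ?_
  filter_upwards [eventually_gt_atTop 0] with n hn
  have hn' : (n : ℝ) ≠ 0 := by exact_mod_cast hn.ne'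
  have hp : p₂ ≠ 0 := hp₂.ne'
  have e2 : ∑ j ∈ Finset.Icc (2 : ℕ) (n ^ 2 - 1),
              (μ (Set.Ioc ((j : ℝ) / (n : ℝ)) (((j : ℝ) + 1) / (n : ℝ)))).toReal /
                  ((n : ℝ) * p₂) * (f ((j : ℝ) / (n : ℝ)) - f 0) =
      (∑ j ∈ Finset.Icc (2 : ℕ) (n ^ 2 - 1), (μ (gridI n j)).toReal *
        (f ((j : ℝ) / (n : ℝ)) - f 0)) / (n * p₂) := by
    rw [Finset.sum_div]
    refine Finset.sum_congr rfl fun j _ => ?_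
    unfold gridI
    ring
  rw [e2, ← Finset.sum_mul]
  change _ = (n : ℝ) * (-(p₁ / ((n : ℝ) * p₂)) * f 0
          + (1 - p₁ / ((n : ℝ) * p₂) -
              (∑ j ∈ Finset.Icc (2 : ℕ) (n ^ 2 - 1), (μ (gridI n j)).toReal) /
                  ((n : ℝ) * p₂)) * (f (1 / (n : ℝ)) - f 0) + _)
  generalize (∑ j ∈ Finset.Icc (2 : ℕ) (n ^ 2 - 1), (μ (gridI n j)).toReal) = A
  generalize (∑ j ∈ Finset.Icc (2 : ℕ) (n ^ 2 - 1), (μ (gridI n j)).toReal *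
        (f ((j : ℝ) / (n : ℝ)) - f 0)) = B
  generalize f (1 / (n : ℝ)) = F
  field_simp
end
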